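/- Every hyperrigid set of generators of a C*-algebra A is quasi hyperrigid: if G generates A and G is hyperrigid, then for every nondegenerate representation π of A on a Hilbert space H_π and every isometry V : H_π → H_π, the condition V*π(g)V = π(g) for all g ∈ G implies V*π(a)V = π(a) for all a ∈ A. -/

import Mathlib

/-!
Let `π` be a representation on `H` and `V` an isometry of `H` with `V*π(g)V = π(g)` for `g ∈ G`.
By the Gelfand–Naimark theorem (`exists_faithful_rep`) there is a faithful representation `σ` of `A`
on some Hilbert space `K`, so `π ⊕ σ` is a faithful representation on `H ⊕ K`. The operator
`W = V ⊕ 1` is an isometry of `H ⊕ K`, hence the compression `T ↦ W*TW` is a unital completely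
positive map (`isCPMap_compression`), and it fixes `π(g) ⊕ σ(g)` for every `g ∈ G`. Hyperrigidity,
applied to the constant sequence of this map, shows that it fixes `π(a) ⊕ σ(a)` for every `a ∈ A`;
the first block of this identity is `V*π(a)V = π(a)`.

The Gelfand–Naimark theorem is obtained by summing the GNS representations of all positive
functionals, which separate points by Hahn–Banach (`exists_positiveLinearMap_ne_zero`).
-/

noncomputable section

/-- An element of a matrix algebra over a star ring is *positive* if it factors as `Nᴴ * N`. -/
def IsPosMat {A : Type*} [NonUnitalSemiring A] [StarRing A] {k : ℕ}
    (M : Matrix (Fin k) (Fin k) A) : Prop :=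
  ∃ N : Matrix (Fin k) (Fin k) A, M = star N * N

/-- A linear map between star algebras is *completely positive* if all its matrix
amplifications preserve positivity. -/
def IsCPMap {A : Type*} [NonUnitalSemiring A] [StarRing A] [Module ℂ A]
    {B : Type*} [NonUnitalSemiring B] [StarRing B] [Module ℂ B] (φ : A →ₗ[ℂ] B) : Prop :=
  ∀ (k : ℕ) (M : Matrix (Fin k) (Fin k) A), IsPosMat M → IsPosMat (M.map ⇑φ)

/-- A set `G` of generators of a C*-algebra `A` is *hyperrigid* if for every faithful
representation of `A` on a Hilbert space `H` and every sequence of UCP maps on `B(H)`,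
norm convergence to the identity on `G` implies norm convergence to the identity on `A`. -/
def Hyperrigid.{u', v'} {A : Type u'} [Semiring A] [Algebra ℂ A] [Star A] (G : Set A) :
    Prop :=
  ∀ (H : Type v') [NormedAddCommGroup H] [InnerProductSpace ℂ H] [CompleteSpace H]
    (π : A →⋆ₐ[ℂ] (H →L[ℂ] H)), Function.Injective π →
    ∀ φ : ℕ → ((H →L[ℂ] H) →ₗ[ℂ] (H →L[ℂ] H)),
      (∀ k, IsCPMap (φ k) ∧ φ k 1 = 1) →
      (∀ g ∈ G, Filter.Tendsto (fun k => ‖φ k (π g) - π g‖) Filter.atTop (nhds 0)) →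
      ∀ a : A, Filter.Tendsto (fun k => ‖φ k (π a) - π a‖) Filter.atTop (nhds 0)

/-- The defining property of a weak boundary representation (no irreducibility assumed). -/
def WeakBoundaryRel {A : Type*} [Semiring A] [Algebra ℂ A] [Star A]
    {H : Type*} [NormedAddCommGroup H] [InnerProductSpace ℂ H] [CompleteSpace H]
    (S : Set A) (π : A →⋆ₐ[ℂ] (H →L[ℂ] H)) : Prop :=
  ∀ V : H →L[ℂ] H, star V * V = 1 →
    (∀ s ∈ S, star V * π s * V = π s) → ∀ a : A, star V * π a * V = π a

/-- A set of generators is *quasi hyperrigid* if every (nondegenerate, i.e. unital)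
representation satisfies the weak boundary relation. -/
def QuasiHyperrigid.{u', v'} {A : Type u'} [Semiring A] [Algebra ℂ A] [Star A]
    (S : Set A) : Prop :=
  ∀ (H : Type v') [NormedAddCommGroup H] [InnerProductSpace ℂ H] [CompleteSpace H]
    (π : A →⋆ₐ[ℂ] (H →L[ℂ] H)), WeakBoundaryRel S π

universe u w

section Faithful

open scoped ComplexOrder ComplexStarModule

variable {A : Type u} [CStarAlgebra A] [PartialOrder A] [StarOrderedRing A]

/-- Positive functionals separate points: `-a*a` lies outside the closed positive cone, so the
Hahn–Banach theorem gives a real functional that is nonnegative on the cone and negative at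
`-a*a`; its complexification is the functional sought. -/
lemma exists_positiveLinearMap_ne_zero {a : A} (ha : a ≠ 0) :
    ∃ F : A →ₚ[ℂ] ℂ, F (star a * a) ≠ 0 := by
  have hmem : -(star a * a) ∉ ProperCone.positive ℝ A := by
    rw [ProperCone.mem_positive]
    intro h
    have h0 : star a * a = 0 := le_antisymm (neg_nonneg.mp h) (star_mul_self_nonneg a)
    exact ha (CStarRing.star_mul_self_eq_zero_iff a |>.mp h0)
  obtain ⟨f, hf, hfa⟩ := (ProperCone.positive ℝ A).hyperplane_separation_point hmem
  let F : A →ₗ[ℂ] ℂ :=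
    { toFun := fun x => (f (ℜ x : A) : ℂ) + Complex.I * (f (ℑ x : A) : ℂ)
      map_add' := fun x y => by simp; ring
      map_smul' := fun z x => by
        simp only [realPart_smul, imaginaryPart_smul]
        apply Complex.ext <;> simp }
  have hF : ∀ x : A, IsSelfAdjoint x → F x = (f x : ℂ) := fun x hx => by
    simp [F, hx.coe_realPart, hx.imaginaryPart]
  refine ⟨PositiveLinearMap.mk₀ F fun x hx => ?_, ?_⟩
  · rw [hF x (.of_nonneg hx)]
    exact_mod_cast hf x (by simpa using hx)
  · change F (star a * a) ≠ 0
    rw [hF _ (.star_mul_self a)]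
    rw [map_neg] at hfa
    exact_mod_cast (neg_lt_zero.mp hfa).ne'

open PositiveLinearMap in
/-- The class of `1` in the GNS space is a witness, since `‖a · 1‖² = F(a*a)`. -/
lemma gnsStarAlgHom_ne_zero (F : A →ₚ[ℂ] ℂ) {a : A} (ha : F (star a * a) ≠ 0) :
    F.gnsStarAlgHom a ≠ 0 := by
  intro h
  have h1 : F.gnsStarAlgHom a ((F.toPreGNS 1 : F.PreGNS) : F.GNS) = 0 := by rw [h]; rfl
  change F.gnsNonUnitalStarAlgHom a _ = 0 at h1
  rw [gnsNonUnitalStarAlgHom_apply_coe,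
    ← norm_eq_zero, UniformSpace.Completion.norm_coe] at h1
  have h2 := F.preGNS_norm_sq (F.leftMulMapPreGNS a (F.toPreGNS 1))
  rw [h1] at h2
  simp at h2
  exact ha h2.symm

end Faithful

section DirectSum

variable {A : Type*} [CStarAlgebra A] {ι : Type*} {E : ι → Type*}
  [∀ i, NormedAddCommGroup (E i)] [∀ i, InnerProductSpace ℂ (E i)] [∀ i, CompleteSpace (E i)]

/-- The Hilbert direct sum `⨁ᵢ σᵢ` of a family of representations, acting coordinatewise on the
`ℓ²`-sum; star homomorphisms are contractive, so `‖a‖` bounds all `σᵢ a` at once. -/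
def hilbertSumRep (σ : ∀ i, A →⋆ₐ[ℂ] (E i →L[ℂ] E i)) :
    A →⋆ₐ[ℂ] (lp E 2 →L[ℂ] lp E 2) where
  toFun a := lp.mapCLM 2 (fun i => σ i a) (norm_nonneg a)
    (fun i => NonUnitalStarAlgHom.norm_apply_le (σ i) a)
  map_one' := by ext; simp
  map_mul' a b := by ext; simp
  map_zero' := by ext; simp
  map_add' a b := by ext; simp
  commutes' r := by ext; simp [Algebra.algebraMap_eq_smul_one]
  map_star' a := by
    refine (ContinuousLinearMap.eq_adjoint_iff _ _).mpr fun x y => ?_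
    simp only [lp.inner_eq_tsum]
    refine tsum_congr fun i => ?_
    simp [map_star, ContinuousLinearMap.star_eq_adjoint, ContinuousLinearMap.adjoint_inner_left]

lemma hilbertSumRep_apply_single [DecidableEq ι] (σ : ∀ i, A →⋆ₐ[ℂ] (E i →L[ℂ] E i)) (a : A)
    (i : ι) (x : E i) : hilbertSumRep σ a (lp.single 2 i x) i = σ i a x := by
  simp [hilbertSumRep]

end DirectSum

open scoped ComplexOrder in
/-- **Gelfand–Naimark theorem**: the direct sum of the GNS representations of all positive
functionals is faithful. It acts on a Hilbert space in the universe of `A`. -/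
lemma exists_faithful_rep (A : Type u) [CStarAlgebra A] :
    ∃ (K : Type u) (_ : NormedAddCommGroup K) (_ : InnerProductSpace ℂ K) (_ : CompleteSpace K)
      (σ : A →⋆ₐ[ℂ] (K →L[ℂ] K)), Function.Injective σ := by
  classical
  let _ := CStarAlgebra.spectralOrder A
  have := CStarAlgebra.spectralOrderedRing A
  refine ⟨lp (fun F : A →ₚ[ℂ] ℂ => F.GNS) 2, inferInstance, inferInstance, inferInstance,
    hilbertSumRep fun F => F.gnsStarAlgHom, ?_⟩
  rw [injective_iff_map_eq_zero]
  intro a ha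
  by_contra hne
  obtain ⟨F, hF⟩ := exists_positiveLinearMap_ne_zero hne
  refine gnsStarAlgHom_ne_zero F hF (ContinuousLinearMap.ext fun x => ?_)
  have h := hilbertSumRep_apply_single (fun F : A →ₚ[ℂ] ℂ => F.gnsStarAlgHom) a F x
  rw [ha] at h
  simpa using h.symm

section OpSum

variable {H : Type*} [NormedAddCommGroup H] [InnerProductSpace ℂ H]
  {K : Type*} [NormedAddCommGroup K] [InnerProductSpace ℂ K]

/-- The block-diagonal operator `T ⊕ S` on the Hilbert space `H ⊕ K`. -/
def opSum (T : H →L[ℂ] H) (S : K →L[ℂ] K) : WithLp 2 (H × K) →L[ℂ] WithLp 2 (H × K) :=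
  (WithLp.prodContinuousLinearEquiv 2 ℂ H K).symm.toContinuousLinearMap ∘L (T.prodMap S) ∘L
    (WithLp.prodContinuousLinearEquiv 2 ℂ H K).toContinuousLinearMap

@[simp] lemma opSum_apply (T : H →L[ℂ] H) (S : K →L[ℂ] K) (x : WithLp 2 (H × K)) :
    opSum T S x = WithLp.toLp 2 (T x.fst, S x.snd) := rfl

lemma opSum_mul (T T' : H →L[ℂ] H) (S S' : K →L[ℂ] K) :
    opSum T S * opSum T' S' = opSum (T * T') (S * S') := rfl

lemma opSum_one : opSum (1 : H →L[ℂ] H) (1 : K →L[ℂ] K) = 1 := rfl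

lemma opSum_star [CompleteSpace H] [CompleteSpace K] (T : H →L[ℂ] H) (S : K →L[ℂ] K) :
    star (opSum T S) = opSum (star T) (star S) := by
  refine ((ContinuousLinearMap.eq_adjoint_iff _ _).mpr fun x y => ?_).symm
  simp [WithLp.prod_inner_apply, ContinuousLinearMap.star_eq_adjoint,
    ContinuousLinearMap.adjoint_inner_left]

lemma opSum_injective_left {T T' : H →L[ℂ] H} {S S' : K →L[ℂ] K} (h : opSum T S = opSum T' S') :
    T = T' := by
  ext x
  simpa using congrArg (fun R => (R (WithLp.toLp 2 (x, 0))).fst) h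

lemma opSum_injective_right {T T' : H →L[ℂ] H} {S S' : K →L[ℂ] K}
    (h : opSum T S = opSum T' S') : S = S' := by
  ext x
  simpa using congrArg (fun R => (R (WithLp.toLp 2 (0, x))).snd) h

/-- The direct sum `π ⊕ σ` of two representations. -/
def repSum [CompleteSpace H] [CompleteSpace K] {A : Type*} [Semiring A] [Algebra ℂ A] [Star A]
    (π : A →⋆ₐ[ℂ] (H →L[ℂ] H)) (σ : A →⋆ₐ[ℂ] (K →L[ℂ] K)) :
    A →⋆ₐ[ℂ] (WithLp 2 (H × K) →L[ℂ] WithLp 2 (H × K)) where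
  toFun a := opSum (π a) (σ a)
  map_one' := by simp [opSum_one]
  map_mul' a b := by simp [opSum_mul]
  map_zero' := by simp only [map_zero]; rfl
  map_add' a b := by simp only [map_add]; rfl
  commutes' r := by simp only [AlgHomClass.commutes]; rfl
  map_star' a := by simp [map_star, opSum_star]

end OpSum

/-- Compression `T ↦ W* T W` as a linear map. -/
def compression {H : Type*} [NormedAddCommGroup H] [InnerProductSpace ℂ H] [CompleteSpace H]
    (W : H →L[ℂ] H) : (H →L[ℂ] H) →ₗ[ℂ] (H →L[ℂ] H) :=
  LinearMap.mulRight ℂ W ∘ₗ LinearMap.mulLeft ℂ (star W)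

/-- If `M = N*N`, then the compressed matrix is `(N · diag W)* (N · diag W)`. -/
lemma isCPMap_compression {H : Type*} [NormedAddCommGroup H] [InnerProductSpace ℂ H]
    [CompleteSpace H] (W : H →L[ℂ] H) : IsCPMap (compression W) := by
  rintro k _ ⟨N, rfl⟩
  refine ⟨N.map (· * W), Matrix.ext fun i j => ?_⟩
  simp [compression, Matrix.mul_apply, Matrix.star_apply, mul_assoc]

/-- Every hyperrigid set of generators of a C*-algebra is quasi
hyperrigid: if `G` generates `A` and `G` is hyperrigid, then for every nondegenerate
representation `π` of `A` and every isometry `V` on `H_π`, `V*π(g)V = π(g)` for all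
`g ∈ G` implies `V*π(a)V = π(a)` for all `a ∈ A`. -/
theorem hyperrigid_implies_quasiHyperrigid
    {A : Type u} [NormedRing A] [StarRing A] [CStarRing A] [CompleteSpace A]
    [NormedAlgebra ℂ A] [StarModule ℂ A]
    (G : Set A)
    (hgen : (StarAlgebra.adjoin ℂ G).topologicalClosure = ⊤)
    (hhr : Hyperrigid.{u, max u w} G) :
    QuasiHyperrigid.{u, w} G := by
  intro H _ _ _ π V hV hG a
  let _ : CStarAlgebra A := {}
  obtain ⟨K, _, _, _, σ, hσ⟩ := exists_faithful_rep A
  have hcomp : ∀ b : A, compression (opSum V (1 : K →L[ℂ] K)) (repSum π σ b) =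
      opSum (star V * π b * V) (σ b) := fun b => by
    change star (opSum V 1) * opSum (π b) (σ b) * opSum V 1 = _
    simp [opSum_star, opSum_mul]
  have hinj : Function.Injective (repSum π σ) := fun b c h => hσ (opSum_injective_right h)
  have hone : compression (opSum V (1 : K →L[ℂ] K)) 1 = 1 := by
    change star (opSum V 1) * 1 * opSum V 1 = _
    simp [opSum_star, opSum_mul, hV, opSum_one]
  have key := hhr (WithLp 2 (H × K)) (repSum π σ) hinj
    (fun _ => compression (opSum V (1 : K →L[ℂ] K)))
    (fun _ => ⟨isCPMap_compression _, hone⟩)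
    (fun g hg => by
      have hfix : compression (opSum V (1 : K →L[ℂ] K)) (repSum π σ g) = repSum π σ g := by
        rw [hcomp, hG g hg]; rfl
      simp [hfix]) a
  -- a constant sequence tending to `0` vanishes
  have hzero := tendsto_nhds_unique key tendsto_const_nhds
  rw [eq_comm, norm_eq_zero, sub_eq_zero, hcomp] at hzero
  exact opSum_injective_left hzero

end
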